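/- arXiv:2012.12952 — 2 statements merged into one kernel-verified Lean document; each statement's English description precedes it below -/
import Mathlib

section
/- Let Y be a CAT(0) space, E : Y → ℝ ∪ {+∞} a λ-convex and lower semicontinuous functional with D(E) nonempty, λ ∈ ℝ, and let (y_t), (z_t) be gradient flow trajectories for E starting from y, z ∈ Y respectively. Then d(y_t, z_t) ≤ e^{−λ(t−s)}·d(y_s, z_s) for all t ≥ s > 0. In particular, the gradient flow trajectory starting from a given point is unique. -/
open Filter MeasureTheory Set Bornology
open scoped ENNReal Topology NNReal

/-- A (constant-speed, minimizing) geodesic defined on `[0,1]`: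
`d(γ_s, γ_t) = |s - t| * d(γ_0, γ_1)` for all `s, t ∈ [0,1]`. -/
def IsGeodesic {Y : Type*} [MetricSpace Y] (γ : ℝ → Y) : Prop :=
  ∀ s ∈ Set.Icc (0:ℝ) 1, ∀ t ∈ Set.Icc (0:ℝ) 1,
    dist (γ s) (γ t) = |s - t| * dist (γ 0) (γ 1)

/-- A metric space is geodesic if every two points are joined by a geodesic. -/
def GeodesicSpace (Y : Type*) [MetricSpace Y] : Prop :=
  ∀ x y : Y, ∃ γ : ℝ → Y, IsGeodesic γ ∧ γ 0 = x ∧ γ 1 = y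

/-- The CAT(0) condition: geodesic space satisfying the comparison inequality
`d²(γ_t, a) ≤ (1-t)·d²(γ_0, a) + t·d²(γ_1, a) − t(1-t)·d²(γ_0, γ_1)`.
(Completeness is required separately as a typeclass assumption.) -/
def Cat0 (Y : Type*) [MetricSpace Y] : Prop :=
  GeodesicSpace Y ∧
    ∀ γ : ℝ → Y, IsGeodesic γ → ∀ a : Y, ∀ t ∈ Set.Icc (0:ℝ) 1,
      dist (γ t) a ^ 2 ≤ (1 - t) * dist (γ 0) a ^ 2 + t * dist (γ 1) a ^ 2
        - t * (1 - t) * dist (γ 0) (γ 1) ^ 2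

/-- A subset is geodesically convex if every geodesic joining two of its points
lies entirely inside it. -/
def GeodesicConvex {Y : Type*} [MetricSpace Y] (C : Set Y) : Prop :=
  ∀ γ : ℝ → Y, IsGeodesic γ → γ 0 ∈ C → γ 1 ∈ C → ∀ t ∈ Set.Icc (0:ℝ) 1, γ t ∈ C

/-- `lam`-convexity along geodesics of an extended-real-valued functional:
`E(γ_t) ≤ (1-t)E(γ_0) + tE(γ_1) − (lam/2)t(1−t)d²(γ_0,γ_1)`. -/
def LamConvex {Y : Type*} [MetricSpace Y] (lam : ℝ) (E : Y → EReal) : Prop :=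
  ∀ γ : ℝ → Y, IsGeodesic γ → ∀ t ∈ Set.Icc (0:ℝ) 1,
    E (γ t) ≤ ((1 - t : ℝ) : EReal) * E (γ 0) + ((t : ℝ) : EReal) * E (γ 1)
      - ((lam / 2 * t * (1 - t) * dist (γ 0) (γ 1) ^ 2 : ℝ) : EReal)

/-- The descending slope `|∂⁻E|(y) = limsup_{z→y} (E(y)−E(z))⁺ / d(y,z)`,
set to `∞` outside the domain `{E < ∞}` of `E`. -/
noncomputable def descendingSlope {Y : Type*} [MetricSpace Y] (E : Y → EReal) (y : Y) :
    ℝ≥0∞ :=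
  if E y = ⊤ then ⊤
  else Filter.limsup (fun z => ENNReal.ofReal ((E y - E z).toReal / dist y z))
      (nhdsWithin y {y}ᶜ)

/-- `ω(y; (y_n)) := limsup_n d(y, y_n)²`. -/
noncomputable def asymptoticRadius {Y : Type*} [MetricSpace Y] (yn : ℕ → Y) (y : Y) : ℝ :=
  Filter.limsup (fun n => dist y (yn n) ^ 2) Filter.atTop

/-- Weak convergence of a bounded sequence: `y` is an asymptotic center
(i.e. a minimizer of `ω(·; ·)`) of every subsequence. -/
def WeakConv {Y : Type*} [MetricSpace Y] (yn : ℕ → Y) (y : Y) : Prop :=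
  Bornology.IsBounded (Set.range yn) ∧
    ∀ φ : ℕ → ℕ, StrictMono φ →
      ∀ z : Y, asymptoticRadius (yn ∘ φ) y ≤ asymptoticRadius (yn ∘ φ) z

/-- Absolute continuity on a set `I ⊆ ℝ`: there is a nonnegative integrable `g`
with `d(y_s, y_t) ≤ ∫_s^t g` for `s ≤ t` in `I`. -/
def AbsContOnSet {Y : Type*} [MetricSpace Y] (y : ℝ → Y) (I : Set ℝ) : Prop :=
  ∃ g : ℝ → ℝ, (∀ t, 0 ≤ g t) ∧ MeasureTheory.IntegrableOn g I ∧
    ∀ s ∈ I, ∀ t ∈ I, s ≤ t → dist (y s) (y t) ≤ ∫ r in s..t, g r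

/-- Absolute continuity on the interval `[a,b]`. -/
def AbsContOn {Y : Type*} [MetricSpace Y] (y : ℝ → Y) (a b : ℝ) : Prop :=
  AbsContOnSet y (Set.Icc a b)

/-- Local absolute continuity on `(0,∞)`. -/
def LocAbsCont {Y : Type*} [MetricSpace Y] (y : ℝ → Y) : Prop :=
  ∀ a b : ℝ, 0 < a → a ≤ b → AbsContOn y a b

/-- The Evolution Variational Inequality: for every `z`, for a.e. `t > 0` the
derivative of `t ↦ ½ d²(y_t, z)` exists and
`(d/dt)(½d²(y_t,z)) + E(y_t) + (lam/2)d²(y_t,z) ≤ E(z)`. -/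
def EVI {Y : Type*} [MetricSpace Y] (lam : ℝ) (E : Y → EReal) (y : ℝ → Y) : Prop :=
  ∀ z : Y, ∀ᵐ t ∂(MeasureTheory.volume.restrict (Set.Ioi (0:ℝ))),
    ∃ d' : ℝ, HasDerivAt (fun s => dist (y s) z ^ 2 / 2) d' t ∧
      (d' : EReal) + E (y t) + ((lam / 2 * dist (y t) z ^ 2 : ℝ) : EReal) ≤ E z

/-- A gradient flow trajectory for `E` starting from `y₀`: a locally absolutely
continuous curve on `(0,∞)` converging to `y₀` at `0` and satisfying the EVI. -/
def GradientFlow {Y : Type*} [MetricSpace Y] (lam : ℝ) (E : Y → EReal) (y₀ : Y)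
    (y : ℝ → Y) : Prop :=
  LocAbsCont y ∧ Filter.Tendsto y (nhdsWithin 0 (Set.Ioi 0)) (nhds y₀) ∧ EVI lam E y

theorem AbsolutelyContinuousOnInterval.of_dist_le {X X' : Type*} [PseudoMetricSpace X]
    [PseudoMetricSpace X'] {f : ℝ → X} {g : ℝ → X'} {a b : ℝ}
    (hg : AbsolutelyContinuousOnInterval g a b)
    (h : ∀ p ∈ uIcc a b, ∀ q ∈ uIcc a b, dist (f p) (f q) ≤ dist (g p) (g q)) :
    AbsolutelyContinuousOnInterval f a b := by
  rw [absolutelyContinuousOnInterval_iff] at hg ⊢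
  intro ε hε
  obtain ⟨δ, hδ, H⟩ := hg ε hε
  refine ⟨δ, hδ, fun I hI hIδ => lt_of_le_of_lt (Finset.sum_le_sum fun i hi => ?_) (H I hI hIδ)⟩
  exact h _ (hI.1 i hi).1 _ (hI.1 i hi).2

theorem AbsContOn.absolutelyContinuousOnInterval {Y : Type*} [MetricSpace Y] {y : ℝ → Y}
    {a b : ℝ} (hab : a ≤ b) (h : AbsContOn y a b) : AbsolutelyContinuousOnInterval y a b := by
  obtain ⟨g, -, hgi, hg⟩ := h
  have hint : IntervalIntegrable g volume a b :=
    (intervalIntegrable_iff_integrableOn_Icc_of_le hab).2 hgi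
  refine (hint.absolutelyContinuousOnInterval_intervalIntegral left_mem_uIcc).of_dist_le ?_
  rw [uIcc_of_le hab]
  have key : ∀ p ∈ Icc a b, ∀ q ∈ Icc a b, p ≤ q →
      dist (y p) (y q) ≤ dist (∫ v in a..p, g v) (∫ v in a..q, g v) := by
    intro p hp q hq hpq
    have hsub : ∀ r ∈ Icc a b, IntervalIntegrable g volume a r := fun r hr =>
      hint.mono_set (by rw [uIcc_of_le hab, uIcc_of_le hr.1]; exact Icc_subset_Icc_right hr.2)
    rw [dist_comm (∫ v in a..p, g v), Real.dist_eq,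
      intervalIntegral.integral_interval_sub_left (hsub q hq) (hsub p hp)]
    exact (hg p hp q hq hpq).trans (le_abs_self _)
  intro p hp q hq
  rcases le_total p q with hpq | hpq
  · exact key p hp q hq hpq
  · rw [dist_comm (y p), dist_comm (∫ v in a..p, g v)]
    exact key q hq p hp hpq

theorem LocAbsCont.absolutelyContinuousOnInterval_dist {Y : Type*} [MetricSpace Y]
    {y : ℝ → Y} (h : LocAbsCont y) (w : Y) {p q : ℝ} (hp : 0 < p) (hpq : p ≤ q) :
    AbsolutelyContinuousOnInterval (fun s => dist (y s) w) p q :=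
  ((h p q hp hpq).absolutelyContinuousOnInterval hpq).of_dist_le fun r _ s _ => by
    rw [Real.dist_eq]; exact abs_dist_sub_le _ _ _

theorem LocAbsCont.absolutelyContinuousOnInterval_half_sq_dist {Y : Type*} [MetricSpace Y]
    {y : ℝ → Y} (h : LocAbsCont y) (w : Y) {p q : ℝ} (hp : 0 < p) (hpq : p ≤ q) :
    AbsolutelyContinuousOnInterval (fun s => dist (y s) w ^ 2 / 2) p q := by
  have hd := h.absolutelyContinuousOnInterval_dist w hp hpq
  convert (hd.mul hd).const_mul (1 / 2) using 2 with s
  simp only [Pi.mul_apply]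
  ring

theorem LocAbsCont.continuousOn {Y : Type*} [MetricSpace Y] {y : ℝ → Y} (h : LocAbsCont y) :
    ContinuousOn y (Ioi 0) := by
  intro x hx
  rw [mem_Ioi] at hx
  have hle : x / 2 ≤ 2 * x := by linarith
  have hc := (h.absolutelyContinuousOnInterval_dist (y x) (half_pos hx) hle).continuousOn
  rw [uIcc_of_le hle] at hc
  have ht : Tendsto (fun s => dist (y s) (y x)) (𝓝 x) (𝓝 (dist (y x) (y x))) :=
    hc.continuousAt (Icc_mem_nhds (by linarith) (by linarith))
  rw [dist_self] at ht
  exact (tendsto_iff_dist_tendsto_zero.2 ht).mono_left nhdsWithin_le_nhds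

/-- The evolution variational inequality at a point of finite energy, read in `ℝ`. -/
theorem EVI.ae_real {Y : Type*} [MetricSpace Y] {lam : ℝ} {E : Y → EReal}
    (hbot : ∀ y, E y ≠ ⊥) {y : ℝ → Y} (h : EVI lam E y) {w : Y} (hw : E w ≠ ⊤) :
    ∀ᵐ t, 0 < t → E (y t) ≠ ⊤ ∧
      deriv (fun s => dist (y s) w ^ 2 / 2) t
        ≤ (E w).toReal - (E (y t)).toReal - lam * (dist (y t) w ^ 2 / 2) := by
  have := h w
  rw [ae_restrict_iff' measurableSet_Ioi] at this
  filter_upwards [this] with t ht htpos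
  obtain ⟨d', hd', hle⟩ := ht htpos
  rw [hd'.deriv]
  have hfin : E (y t) ≠ ⊤ := by
    intro htop
    rw [htop, EReal.coe_add_top, EReal.top_add_coe] at hle
    exact hw (top_le_iff.1 hle)
  refine ⟨hfin, ?_⟩
  rw [← EReal.coe_toReal hw (hbot w), ← EReal.coe_toReal hfin (hbot _)] at hle
  have hle' : d' + (E (y t)).toReal + lam / 2 * dist (y t) w ^ 2 ≤ (E w).toReal := by
    exact_mod_cast hle
  linarith

theorem EVI.intervalIntegrable_energy {Y : Type*} [MetricSpace Y] {lam : ℝ} {E : Y → EReal}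
    (hbot : ∀ y, E y ≠ ⊥) (hlsc : LowerSemicontinuous E) (hdom : ∃ y, E y ≠ ⊤) {y : ℝ → Y}
    (hac : LocAbsCont y) (h : EVI lam E y) {p q : ℝ} (hp : 0 < p) (hpq : p ≤ q) :
    IntervalIntegrable (fun t => (E (y t)).toReal) volume p q := by
  obtain ⟨w, hw⟩ := hdom
  have hcont : ContinuousOn y (Icc p q) :=
    hac.continuousOn.mono fun t ht => lt_of_lt_of_le hp ht.1
  have hAC := hac.absolutelyContinuousOnInterval_half_sq_dist w hp hpq
  have hmeas : AEStronglyMeasurable (fun t => (E (y t)).toReal) (volume.restrict (uIoc p q)) := by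
    have hext : Continuous (IccExtend hpq ((Icc p q).domRestrict y)) :=
      (continuousOn_iff_continuous_domRestrict.1 hcont).Icc_extend'
    have hm : Measurable fun t => (E (IccExtend hpq ((Icc p q).domRestrict y) t)).toReal :=
      (hlsc.comp hext).measurable.ereal_toReal
    refine hm.aestronglyMeasurable.congr ?_
    rw [uIoc_of_le hpq]
    filter_upwards [ae_restrict_mem measurableSet_Ioc] with t ht
    rw [IccExtend_of_mem _ _ (Ioc_subset_Icc_self ht), domRestrict_apply]
  obtain ⟨m, -, hm⟩ := (hlsc.lowerSemicontinuousOn (y '' Icc p q)).exists_isMinOn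
    ((nonempty_Icc.2 hpq).image y) (isCompact_Icc.image_of_continuousOn hcont)
  have hφ : IntervalIntegrable (fun s => dist (y s) w ^ 2 / 2) volume p q :=
    hAC.continuousOn.intervalIntegrable
  have hup : IntervalIntegrable (fun t => (E w).toReal - lam * (dist (y t) w ^ 2 / 2)
      - deriv (fun s => dist (y s) w ^ 2 / 2) t) volume p q :=
    (intervalIntegrable_const.sub (hφ.const_mul lam)).sub hAC.intervalIntegrable_deriv
  refine (hup.abs.add (intervalIntegrable_const (c := |(E m).toReal|))).mono_fun' hmeas ?_
  rw [uIoc_of_le hpq]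
  filter_upwards [ae_restrict_of_ae (h.ae_real hbot hw), ae_restrict_mem measurableSet_Ioc]
    with t ht htpq
  obtain ⟨hfin, hle⟩ := ht (hp.trans htpq.1)
  have hlow : (E m).toReal ≤ (E (y t)).toReal :=
    EReal.toReal_le_toReal (hm ⟨t, Ioc_subset_Icc_self htpq, rfl⟩) (hbot m) hfin
  rw [Real.norm_eq_abs, abs_le]
  have h1 := neg_abs_le (E m).toReal
  have h2 := le_abs_self ((E w).toReal - lam * (dist (y t) w ^ 2 / 2)
      - deriv (fun s => dist (y s) w ^ 2 / 2) t)
  have h3 := abs_nonneg ((E w).toReal - lam * (dist (y t) w ^ 2 / 2)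
      - deriv (fun s => dist (y s) w ^ 2 / 2) t)
  have h4 := abs_nonneg (E m).toReal
  constructor <;> linarith

/-- The evolution variational inequality integrated in time. -/
theorem EVI.half_sq_dist_sub_le {Y : Type*} [MetricSpace Y] {lam : ℝ} {E : Y → EReal}
    (hbot : ∀ y, E y ≠ ⊥) (hlsc : LowerSemicontinuous E) {y : ℝ → Y}
    (hac : LocAbsCont y) (h : EVI lam E y) {w : Y} (hw : E w ≠ ⊤) {p q : ℝ} (hp : 0 < p)
    (hpq : p ≤ q) :
    dist (y q) w ^ 2 / 2 - dist (y p) w ^ 2 / 2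
      ≤ (q - p) * (E w).toReal - (∫ r in p..q, (E (y r)).toReal)
        + ∫ r in p..q, -lam * (dist (y r) w ^ 2 / 2) := by
  have hAC := hac.absolutelyContinuousOnInterval_half_sq_dist w hp hpq
  have hφ : IntervalIntegrable (fun s => -lam * (dist (y s) w ^ 2 / 2)) volume p q :=
    hAC.continuousOn.intervalIntegrable.const_mul _
  have hG := h.intervalIntegrable_energy hbot hlsc ⟨w, hw⟩ hac hp hpq
  have hc : IntervalIntegrable (fun _ => (E w).toReal) volume p q := intervalIntegrable_const
  rw [← hAC.integral_deriv_eq_sub, ← smul_eq_mul (q - p), ← intervalIntegral.integral_const,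
    ← intervalIntegral.integral_sub hc hG, ← intervalIntegral.integral_add (hc.sub hG) hφ]
  refine intervalIntegral.integral_mono_ae_restrict hpq hAC.intervalIntegrable_deriv
    ((hc.sub hG).add hφ) ?_
  filter_upwards [ae_restrict_of_ae (h.ae_real hbot hw), ae_restrict_mem measurableSet_Icc]
    with t ht htpq
  have := (ht (lt_of_lt_of_le hp htpq.1)).2
  linarith

theorem ContinuousOn.intervalIntegrable_of_pos {f : ℝ → ℝ} (hf : ContinuousOn f (Ioi 0))
    {p q : ℝ} (hp : 0 < p) (hq : 0 < q) : IntervalIntegrable f volume p q :=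
  (hf.mono fun _ hx => lt_of_lt_of_le (lt_min hp hq) hx.1).intervalIntegrable

theorem hasDerivAt_primitive_of_continuousOn_Ioi {f : ℝ → ℝ} (hf : ContinuousOn f (Ioi 0))
    {a x : ℝ} (ha : 0 < a) (hx : 0 < x) : HasDerivAt (fun u => ∫ t in a..u, f t) (f x) x :=
  intervalIntegral.integral_hasDerivAt_right (hf.intervalIntegrable_of_pos ha hx)
    (hf.stronglyMeasurableAtFilter isOpen_Ioi x hx) (hf.continuousAt (Ioi_mem_nhds hx))

theorem continuousOn_primitive_Ioi {f : ℝ → ℝ}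
    (hf : ∀ p q, 0 < p → p ≤ q → IntervalIntegrable f volume p q) {a : ℝ} (ha : 0 < a) :
    ContinuousOn (fun u => ∫ t in a..u, f t) (Ioi 0) := by
  intro x hx
  have hx : 0 < x := hx
  have hmin : min a (x / 2) ≤ max a (2 * x) := (min_le_left _ _).trans (le_max_left _ _)
  have := intervalIntegral.continuousOn_primitive_interval' (a := a)
    (hf (min a (x / 2)) (max a (2 * x)) (lt_min ha (by linarith)) hmin)
    (by rw [uIcc_of_le hmin]; exact ⟨min_le_left _ _, le_max_left _ _⟩)
  rw [uIcc_of_le hmin] at this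
  refine (this.continuousAt (Icc_mem_nhds ?_ ?_)).continuousWithinAt
  · exact lt_of_le_of_lt (min_le_right _ _) (by linarith)
  · exact lt_of_lt_of_le (by linarith) (le_max_right _ _)

theorem tendsto_integral_translate_sub {f : ℝ → ℝ} (hf : ContinuousOn f (Ioi 0)) {a b : ℝ}
    (ha : 0 < a) (hb : 0 < b) :
    Tendsto (fun h => h⁻¹ * ∫ t in a..b, (f (t + h) - f t)) (𝓝[>] 0) (𝓝 (f b - f a)) := by
  have hB := (hasDerivAt_primitive_of_continuousOn_Ioi hf ha hb).tendsto_slope_zero_right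
  have hA := (hasDerivAt_primitive_of_continuousOn_Ioi hf ha ha).tendsto_slope_zero_right
  refine (hB.sub hA).congr' ?_
  filter_upwards [self_mem_nhdsWithin] with h hh
  have hh : 0 < h := hh
  have hi := fun {p q : ℝ} (hp : 0 < p) (hq : 0 < q) => hf.intervalIntegrable_of_pos hp hq
  have hah : 0 < a + h := by linarith
  have hbh : 0 < b + h := by linarith
  have hsh : IntervalIntegrable (fun t => f (t + h)) volume a b := by
    simpa using (hi hah hbh).comp_add_right h
  rw [intervalIntegral.integral_sub hsh (hi ha hb), intervalIntegral.integral_comp_add_right,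
    ← intervalIntegral.integral_interval_sub_left (hi ha hbh) (hi ha hah)]
  simp only [smul_eq_mul, intervalIntegral.integral_same]
  ring

theorem LocAbsCont.continuousOn_half_sq_dist {Y : Type*} [MetricSpace Y] {y z : ℝ → Y}
    (hy : LocAbsCont y) (hz : LocAbsCont z) :
    ContinuousOn (fun t => dist (y t) (z t) ^ 2 / 2) (Ioi 0) :=
  ((continuous_dist.comp_continuousOn (hy.continuousOn.prodMk hz.continuousOn)).pow 2).div_const 2

/-- Increment of the half squared distance between two trajectories over a short time step `h`,
uniformly in the starting time. -/
theorem EVI.half_sq_dist_translate_sub_le {Y : Type*} [MetricSpace Y] {lam : ℝ} {E : Y → EReal}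
    (hbot : ∀ y, E y ≠ ⊥) (hlsc : LowerSemicontinuous E) {y z : ℝ → Y}
    (hyac : LocAbsCont y) (hy : EVI lam E y) (hzac : LocAbsCont z) (hz : EVI lam E z)
    {a b ε : ℝ} (ha : 0 < a) (hε : 0 < ε) :
    ∀ᶠ h in 𝓝[>] (0 : ℝ), ∀ t ∈ Icc a b, E (y t) ≠ ⊤ → E (z (t + h)) ≠ ⊤ →
      dist (y (t + h)) (z (t + h)) ^ 2 / 2 - dist (y t) (z t) ^ 2 / 2
        ≤ h * ((E (z (t + h))).toReal + (E (y t)).toReal)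
          - ((∫ r in t..t + h, (E (y r)).toReal) + ∫ r in t..t + h, (E (z r)).toReal)
          + h * (-2 * lam * (dist (y t) (z t) ^ 2 / 2) + ε) := by
  have hyc := hyac.continuousOn
  have hzc := hzac.continuousOn
  have hsub : Icc a (b + 1) ⊆ Ioi 0 := fun t ht => lt_of_lt_of_le ha ht.1
  have hcont : ContinuousOn (fun p : ℝ × ℝ => dist (y p.1) (z p.2) ^ 2 / 2)
      (Icc a (b + 1) ×ˢ Icc a (b + 1)) := by
    have h1 : ContinuousOn (fun p : ℝ × ℝ => y p.1) (Icc a (b + 1) ×ˢ Icc a (b + 1)) :=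
      (hyc.mono hsub).comp continuousOn_fst fun p hp => hp.1
    have h2 : ContinuousOn (fun p : ℝ × ℝ => z p.2) (Icc a (b + 1) ×ˢ Icc a (b + 1)) :=
      (hzc.mono hsub).comp continuousOn_snd fun p hp => hp.2
    exact ((continuous_dist.comp_continuousOn (h1.prodMk h2)).pow 2).div_const 2
  have hunif := (isCompact_Icc.prod isCompact_Icc).uniformContinuousOn_of_continuous hcont
  have hη : 0 < ε / (2 * (|lam| + 1)) := by positivity
  obtain ⟨δ, hδ, hδ'⟩ := Metric.uniformContinuousOn_iff.1 hunif _ hη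
  have hclose : ∀ u v t, t ∈ Icc a (b + 1) → u ∈ Icc a (b + 1) → v ∈ Icc a (b + 1) →
      |u - t| < δ → |v - t| < δ →
      -lam * (dist (y u) (z v) ^ 2 / 2) ≤ -lam * (dist (y t) (z t) ^ 2 / 2) + ε / 2 := by
    intro u v t ht hu hv hut hvt
    have hlt := hδ' (u, v) ⟨hu, hv⟩ (t, t) ⟨ht, ht⟩ (max_lt hut hvt)
    rw [Real.dist_eq] at hlt
    have hmul : |lam| * |dist (y u) (z v) ^ 2 / 2 - dist (y t) (z t) ^ 2 / 2| ≤ ε / 2 := by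
      calc _ ≤ (|lam| + 1) * (ε / (2 * (|lam| + 1))) := by gcongr; linarith
        _ = ε / 2 := by field_simp
    rw [← abs_mul] at hmul
    have := (abs_le.1 hmul).1
    linarith
  have hlt1 : ∀ᶠ h in 𝓝[>] (0 : ℝ), h < min δ 1 :=
    nhdsWithin_le_nhds (Iio_mem_nhds (lt_min hδ one_pos))
  filter_upwards [hlt1, self_mem_nhdsWithin] with h hhδ hh t ht hyt hzt
  have hh : 0 < h := hh
  have hhd : h < δ := lt_of_lt_of_le hhδ (min_le_left _ _)
  have hh1 : h < 1 := lt_of_lt_of_le hhδ (min_le_right _ _)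
  have ht0 : 0 < t := lt_of_lt_of_le ha ht.1
  have hth : t ≤ t + h := by linarith
  have hmem : ∀ r ∈ Icc t (t + h), r ∈ Icc a (b + 1) ∧ |r - t| < δ := fun r hr =>
    ⟨⟨ht.1.trans hr.1, by linarith [hr.2, ht.2]⟩,
      by rw [abs_of_nonneg (sub_nonneg.2 hr.1)]; linarith [hr.2]⟩
  have htI := (hmem t ⟨le_rfl, hth⟩).1
  have hthI := hmem (t + h) ⟨hth, le_rfl⟩
  have e1 := hy.half_sq_dist_sub_le hbot hlsc hyac hzt ht0 hth
  have e2 := hz.half_sq_dist_sub_le hbot hlsc hzac hyt ht0 hth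
  have bound : ∀ f : ℝ → ℝ, IntervalIntegrable f volume t (t + h) →
      (∀ r ∈ Icc t (t + h), f r ≤ -lam * (dist (y t) (z t) ^ 2 / 2) + ε / 2) →
      ∫ r in t..t + h, f r ≤ h * (-lam * (dist (y t) (z t) ^ 2 / 2) + ε / 2) := by
    intro f hf hle
    have := intervalIntegral.integral_mono_on hth hf intervalIntegrable_const hle
    rwa [intervalIntegral.integral_const, smul_eq_mul, add_sub_cancel_left] at this
  have b1 := bound _
    ((hyac.absolutelyContinuousOnInterval_half_sq_dist (z (t + h)) ht0
      hth).continuousOn.intervalIntegrable.const_mul (-lam))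
    fun r hr => hclose r (t + h) t htI (hmem r hr).1 hthI.1 (hmem r hr).2 hthI.2
  have b2 := bound _
    ((hzac.absolutelyContinuousOnInterval_half_sq_dist (y t) ht0
      hth).continuousOn.intervalIntegrable.const_mul (-lam))
    fun r hr => by
      rw [dist_comm]
      exact hclose t r t htI htI (hmem r hr).1 (by simpa using hδ) (hmem r hr).2
  rw [dist_comm (z (t + h)) (y t), dist_comm (z t) (y t)] at e2
  rw [add_sub_cancel_left] at e1 e2
  linarith

theorem EVI.half_sq_dist_sub_le_integral {Y : Type*} [MetricSpace Y] {lam : ℝ} {E : Y → EReal}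
    (hbot : ∀ y, E y ≠ ⊥) (hlsc : LowerSemicontinuous E) (hdom : ∃ y, E y ≠ ⊤) {y z : ℝ → Y}
    (hyac : LocAbsCont y) (hy : EVI lam E y) (hzac : LocAbsCont z) (hz : EVI lam E z)
    {a b ε : ℝ} (ha : 0 < a) (hab : a ≤ b) (hε : 0 < ε) :
    dist (y b) (z b) ^ 2 / 2 - dist (y a) (z a) ^ 2 / 2
      ≤ ∫ t in a..b, (-2 * lam * (dist (y t) (z t) ^ 2 / 2) + ε) := by
  have hb : 0 < b := ha.trans_le hab
  set F : ℝ → ℝ := fun t => dist (y t) (z t) ^ 2 / 2 with hF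
  set G : ℝ → ℝ := fun t => (E (y t)).toReal
  set H : ℝ → ℝ := fun t => (E (z t)).toReal
  have hFc : ContinuousOn F (Ioi 0) :=
    hyac.continuousOn_half_sq_dist hzac
  have hG : ∀ p q, 0 < p → p ≤ q → IntervalIntegrable G volume p q := fun p q hp hpq =>
    hy.intervalIntegrable_energy hbot hlsc hdom hyac hp hpq
  have hH : ∀ p q, 0 < p → p ≤ q → IntervalIntegrable H volume p q := fun p q hp hpq =>
    hz.intervalIntegrable_energy hbot hlsc hdom hzac hp hpq
  have hKc := continuousOn_primitive_Ioi hH ha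
  set K : ℝ → ℝ := fun u => ∫ t in a..u, H t with hK
  set P : ℝ → ℝ := fun u => (∫ t in a..u, G t) + K u with hP
  have hPc : ContinuousOn P (Ioi 0) := (continuousOn_primitive_Ioi hG ha).add hKc
  set R : ℝ → ℝ := fun t => -2 * lam * F t + ε with hR
  have hRi : IntervalIntegrable R volume a b :=
    ((hFc.intervalIntegrable_of_pos ha hb).const_mul _).add intervalIntegrable_const
  have hshift : ∀ {f : ℝ → ℝ} {h : ℝ}, IntervalIntegrable f volume (a + h) (b + h) →
      IntervalIntegrable (fun t => f (t + h)) volume a b := fun {f h} hf => by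
    simpa using hf.comp_add_right h
  have hev : ∀ᶠ h in 𝓝[>] (0 : ℝ), h⁻¹ * ∫ t in a..b, (F (t + h) - F t) ≤
      (K (b + h) - K (a + h) + ∫ t in a..b, G t) - h⁻¹ * (∫ t in a..b, (P (t + h) - P t))
        + ∫ t in a..b, R t := by
    filter_upwards [EVI.half_sq_dist_translate_sub_le (b := b) hbot hlsc hyac hy hzac hz ha hε,
      self_mem_nhdsWithin] with h hstep hh
    have hh : 0 < h := hh
    have hah : 0 < a + h := by linarith
    have hbh : 0 < b + h := by linarith
    have hHs : IntervalIntegrable (fun t => H (t + h)) volume a b :=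
      hshift (hH _ _ hah (by linarith))
    have hFs : IntervalIntegrable (fun t => F (t + h) - F t) volume a b :=
      (hshift (hFc.intervalIntegrable_of_pos hah hbh)).sub (hFc.intervalIntegrable_of_pos ha hb)
    have hPs : IntervalIntegrable (fun t => P (t + h) - P t) volume a b :=
      (hshift (hPc.intervalIntegrable_of_pos hah hbh)).sub (hPc.intervalIntegrable_of_pos ha hb)
    have hHG := (hHs.add (hG a b ha hab)).const_mul h
    have hint := intervalIntegral.integral_mono_ae_restrict hab hFs
      ((hHG.sub hPs).add (hRi.const_mul h)) (by
        obtain ⟨w, hw⟩ := hdom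
        have hzae := (measurePreserving_add_right volume h).quasiMeasurePreserving.ae
          (hz.ae_real hbot hw)
        filter_upwards [ae_restrict_of_ae (hy.ae_real hbot hw), ae_restrict_of_ae hzae,
          ae_restrict_mem measurableSet_Icc] with t hyt hzt ht
        have ht0 : 0 < t := lt_of_lt_of_le ha ht.1
        have hs := hstep t ht (hyt ht0).1 (hzt (by linarith)).1
        have hat : a ≤ t := ht.1
        have hGs := intervalIntegral.integral_interval_sub_left
          (hG a (t + h) ha (by linarith)) (hG a t ha hat)
        have hHs' := intervalIntegral.integral_interval_sub_left
          (hH a (t + h) ha (by linarith)) (hH a t ha hat)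
        rw [← hGs, ← hHs'] at hs
        simp only [hP, hK, hR, hF]
        linarith)
    rw [intervalIntegral.integral_add (hHG.sub hPs) (hRi.const_mul h),
      intervalIntegral.integral_sub hHG hPs, intervalIntegral.integral_const_mul,
      intervalIntegral.integral_const_mul, intervalIntegral.integral_add hHs (hG a b ha hab),
      intervalIntegral.integral_comp_add_right H h,
      ← intervalIntegral.integral_interval_sub_left (hH a (b + h) ha (by linarith))
        (hH a (a + h) ha (by linarith))] at hint
    have := mul_le_mul_of_nonneg_left hint (inv_nonneg.2 hh.le)
    refine this.trans_eq ?_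
    simp only [hK]
    field_simp
  have hKt : ∀ {x : ℝ}, 0 < x → Tendsto (fun h => K (x + h)) (𝓝[>] 0) (𝓝 (K x)) := by
    intro x hx
    have hc : ContinuousAt (fun h => K (x + h)) 0 :=
      ContinuousAt.comp (g := K) (f := fun h => x + h)
        (by simpa using hKc.continuousAt (Ioi_mem_nhds hx)) (by fun_prop)
    simpa using hc.tendsto.mono_left nhdsWithin_le_nhds
  have hlim := le_of_tendsto_of_tendsto (tendsto_integral_translate_sub hFc ha hb)
    (((((hKt hb).sub (hKt ha)).add_const _).sub
      (tendsto_integral_translate_sub hPc ha hb)).add_const _) hev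
  simp only [hP, hK, intervalIntegral.integral_same] at hlim
  change F b - F a ≤ ∫ t in a..b, R t
  linarith

theorem EVI.dist_le_exp_mul_dist {Y : Type*} [MetricSpace Y] {lam : ℝ} {E : Y → EReal}
    (hbot : ∀ y, E y ≠ ⊥) (hlsc : LowerSemicontinuous E) (hdom : ∃ y, E y ≠ ⊤) {y z : ℝ → Y}
    (hyac : LocAbsCont y) (hy : EVI lam E y) (hzac : LocAbsCont z) (hz : EVI lam E z)
    {s t : ℝ} (hs : 0 < s) (hst : s ≤ t) :
    dist (y t) (z t) ≤ Real.exp (-lam * (t - s)) * dist (y s) (z s) := by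
  have hFc : ContinuousOn (fun t => dist (y t) (z t) ^ 2 / 2) (Ioi 0) :=
    hyac.continuousOn_half_sq_dist hzac
  have hgr := le_gronwallBound_of_liminf_deriv_right_le (K := -2 * lam) (ε := 0) (a := s) (b := t)
    (f' := fun x => -2 * lam * (dist (y x) (z x) ^ 2 / 2))
    (hFc.mono fun r hr => lt_of_lt_of_le hs hr.1) (fun x hx r hr => ?_) le_rfl
    (fun x _ => by simp) t ⟨hst, le_rfl⟩
  · rw [gronwallBound_ε0] at hgr
    refine le_of_sq_le_sq ?_ (by positivity)
    rw [mul_pow, ← Real.exp_nat_mul]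
    have : ((2 : ℕ) : ℝ) * (-lam * (t - s)) = -2 * lam * (t - s) := by push_cast; ring
    rw [this]
    linarith
  · have hx0 : 0 < x := lt_of_lt_of_le hs hx.1
    set ε : ℝ := (r - -2 * lam * (dist (y x) (z x) ^ 2 / 2)) / 2 with hεdef
    have hε : 0 < ε := half_pos (sub_pos.2 hr)
    have hRc : ContinuousOn (fun t => -2 * lam * (dist (y t) (z t) ^ 2 / 2) + ε) (Ioi 0) :=
      (continuousOn_const.mul hFc).add continuousOn_const
    have hslope := (hasDerivAt_iff_tendsto_slope.1
      (hasDerivAt_primitive_of_continuousOn_Ioi hRc hx0 hx0)).mono_left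
      (nhdsWithin_mono x fun u (hu : u ∈ Ioi x) => ne_of_gt hu)
    have hεr : -2 * lam * (dist (y x) (z x) ^ 2 / 2) + ε < r := by linarith
    have hlt := hslope.eventually (Iio_mem_nhds hεr)
    refine Eventually.frequently ?_
    filter_upwards [hlt, self_mem_nhdsWithin] with u hu hxu
    have hxu : x < u := hxu
    refine lt_of_le_of_lt ?_ hu
    rw [slope_def_field, intervalIntegral.integral_same, sub_zero,
      div_eq_inv_mul _ (u - x)]
    exact mul_le_mul_of_nonneg_left
      (EVI.half_sq_dist_sub_le_integral hbot hlsc hdom hyac hy hzac hz hx0 hxu.le hε)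
      (inv_nonneg.2 (sub_nonneg.2 hxu.le))

/-- **`λ`-contraction and uniqueness of gradient flow trajectories** on a CAT(0) space:
`d(y_t, z_t) ≤ e^{−λ(t−s)} d(y_s, z_s)` for `t ≥ s > 0`, and two trajectories with the
same starting point coincide. -/
theorem gradientFlow_contraction_and_unique {Y : Type*} [MetricSpace Y] [CompleteSpace Y]
    (hY : Cat0 Y) (lam : ℝ) (E : Y → EReal) (hbot : ∀ y, E y ≠ ⊥)
    (hconv : LamConvex lam E) (hlsc : LowerSemicontinuous E) (hdom : ∃ y, E y ≠ ⊤)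
    (a b : Y) (ytraj ztraj : ℝ → Y)
    (hy : GradientFlow lam E a ytraj) (hz : GradientFlow lam E b ztraj) :
    (∀ s t : ℝ, 0 < s → s ≤ t →
        dist (ytraj t) (ztraj t) ≤ Real.exp (-lam * (t - s)) * dist (ytraj s) (ztraj s)) ∧
      (a = b → ∀ t : ℝ, 0 < t → ytraj t = ztraj t) := by
  have hcontr : ∀ s t : ℝ, 0 < s → s ≤ t →
      dist (ytraj t) (ztraj t) ≤ Real.exp (-lam * (t - s)) * dist (ytraj s) (ztraj s) :=
    fun s t hs hst => EVI.dist_le_exp_mul_dist hbot hlsc hdom hy.1 hy.2.2 hz.1 hz.2.2 hs hst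
  refine ⟨hcontr, ?_⟩
  rintro rfl t ht
  have hexp : Tendsto (fun s => Real.exp (-lam * (t - s))) (𝓝[>] 0)
      (𝓝 (Real.exp (-lam * (t - 0)))) :=
    (Continuous.tendsto (by fun_prop) 0).mono_left nhdsWithin_le_nhds
  have hlim := hexp.mul (hy.2.1.dist hz.2.1)
  rw [dist_self, mul_zero] at hlim
  refine dist_le_zero.1 (ge_of_tendsto hlim ?_)
  filter_upwards [self_mem_nhdsWithin, nhdsWithin_le_nhds (Iio_mem_nhds ht)] with s hs hst
  exact hcontr s t hs (le_of_lt hst)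
end

section
/- Let Y be a metric space, I ⊆ ℝ an interval and γ : I → Y an absolutely continuous curve. Then for almost every t ∈ I the limit |γ̇_t| := lim_{h→0} d(γ_{t+h}, γ_t)/|h| exists (the metric speed); the function t ↦ |γ̇_t| belongs to L¹(I), satisfies d(γ_s, γ_t) ≤ ∫_s^t |γ̇_r| dr for all s ≤ t in I, and is minimal in the almost-everywhere sense among all functions g ∈ L¹(I) with d(γ_s, γ_t) ≤ ∫_s^t g(r) dr for all s ≤ t in I. -/
open Filter MeasureTheory Set Bornology
open scoped ENNReal Topology NNReal

/-- A function whose increments are dominated by those of an absolutely continuous function is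
absolutely continuous. -/
theorem AbsolutelyContinuousOnInterval.of_dist_le_s18 {X Z : Type*} [PseudoMetricSpace X]
    [PseudoMetricSpace Z] {f : ℝ → X} {F : ℝ → Z} {a b : ℝ}
    (hF : AbsolutelyContinuousOnInterval F a b)
    (hle : ∀ s ∈ uIcc a b, ∀ t ∈ uIcc a b, dist (f s) (f t) ≤ dist (F s) (F t)) :
    AbsolutelyContinuousOnInterval f a b := by
  rw [absolutelyContinuousOnInterval_iff] at hF ⊢
  intro ε hε
  obtain ⟨δ, hδ, h⟩ := hF ε hε
  refine ⟨δ, hδ, fun E hE hlen => (Finset.sum_le_sum fun i hi => ?_).trans_lt (h E hE hlen)⟩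
  exact hle _ (hE.1 i hi).1 _ (hE.1 i hi).2

/-- Almost every point of an interval is an interior point. -/
theorem Set.OrdConnected.ae_mem_nhds {I : Set ℝ} (hI : I.OrdConnected) :
    ∀ᵐ t ∂(volume.restrict I), I ∈ 𝓝 t := by
  rw [ae_restrict_iff' hI.measurableSet]
  have hnull : volume (frontier I) = 0 := hI.convex.addHaar_frontier volume
  filter_upwards [measure_eq_zero_iff_ae_notMem.1 hnull] with t ht htI
  by_contra hmem
  exact ht ⟨subset_closure htI, fun hint => hmem (mem_interior_iff_mem_nhds.1 hint)⟩

/-- The metric difference quotient of a differentiable real function converges to the absolute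
value of the derivative. -/
theorem HasDerivAt.tendsto_dist_div_abs {f : ℝ → ℝ} {f' t : ℝ} (hf : HasDerivAt f f' t) :
    Tendsto (fun h => dist (f (t + h)) (f t) / |h|) (𝓝[≠] 0) (𝓝 |f'|) := by
  refine (hf.tendsto_slope_zero.abs).congr fun h => ?_
  rw [smul_eq_mul, abs_mul, abs_inv, Real.dist_eq, div_eq_inv_mul]

/-- If the increments of `f` at `t` are dominated by those of a differentiable function `F`,
then so is the derivative. -/
theorem abs_deriv_le_of_eventually_dist_le {f F : ℝ → ℝ} {F' t : ℝ} (hF : HasDerivAt F F' t)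
    (hle : ∀ᶠ s in 𝓝 t, dist (f s) (f t) ≤ dist (F s) (F t)) : |deriv f t| ≤ |F'| := by
  by_cases hf : DifferentiableAt ℝ f t
  · refine le_of_tendsto_of_tendsto hf.hasDerivAt.tendsto_dist_div_abs
      hF.tendsto_dist_div_abs ?_
    have hadd : Tendsto (fun h : ℝ => t + h) (𝓝[≠] 0) (𝓝 t) :=
      ((continuous_const_add t).tendsto' 0 t (add_zero t)).mono_left nhdsWithin_le_nhds
    filter_upwards [hadd.eventually hle] with h hh
    gcongr
  · simp [deriv_zero_of_not_differentiableAt hf]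

/-- An integrable function on an interval has an absolutely continuous primitive. -/
theorem exists_primitive_of_integrableOn {I : Set ℝ} (hI : I.OrdConnected) {g : ℝ → ℝ}
    (hg : IntegrableOn g I) :
    ∃ F : ℝ → ℝ, (∀ s ∈ I, ∀ t ∈ I, ∫ r in s..t, g r = F t - F s) ∧
      (∀ a b, AbsolutelyContinuousOnInterval F a b) ∧
      ∀ᵐ t ∂(volume.restrict I), HasDerivAt F (g t) t := by
  have hint : Integrable (I.indicator g) := hg.integrable_indicator hI.measurableSet
  refine ⟨fun t => ∫ r in (0 : ℝ)..t, I.indicator g r, fun s hs t ht => ?_, fun a b => ?_, ?_⟩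
  · rw [intervalIntegral.integral_interval_sub_left hint.intervalIntegrable
      hint.intervalIntegrable]
    refine intervalIntegral.integral_congr fun r hr => ?_
    rw [indicator_of_mem (hI.uIcc_subset hs ht hr)]
  · have hR : IntervalIntegrable (I.indicator g) volume (-(|a| + |b|)) (|a| + |b|) :=
      hint.intervalIntegrable
    have hsub : uIcc (-(|a| + |b|)) (|a| + |b|) = Icc (-(|a| + |b|)) (|a| + |b|) :=
      uIcc_of_le (neg_le_self (by positivity))
    refine (hR.absolutelyContinuousOnInterval_intervalIntegral (c := 0) ?_).mono ?_ <;> rw [hsub]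
    · exact ⟨neg_nonpos.2 (by positivity), by positivity⟩
    · refine uIcc_subset_Icc (abs_le.1 ?_) (abs_le.1 ?_) <;> simp
  · rw [ae_restrict_iff' hI.measurableSet]
    filter_upwards [LocallyIntegrable.ae_hasDerivAt_integral hint.locallyIntegrable] with t ht htI
    simpa [indicator_of_mem htI] using ht 0

/-- A density controlling the distance along a curve controls it through its primitive. -/
theorem dist_le_dist_primitive {Y : Type*} [PseudoMetricSpace Y] {I : Set ℝ} {γ : ℝ → Y}
    {g F : ℝ → ℝ} (hF : ∀ s ∈ I, ∀ t ∈ I, ∫ r in s..t, g r = F t - F s)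
    (hle : ∀ s ∈ I, ∀ t ∈ I, s ≤ t → dist (γ s) (γ t) ≤ ∫ r in s..t, g r) :
    ∀ s ∈ I, ∀ t ∈ I, dist (γ s) (γ t) ≤ dist (F s) (F t) := by
  intro s hs t ht
  rcases le_total s t with hst | hts
  · rw [dist_comm (F s), Real.dist_eq, ← hF s hs t ht]
    exact (hle s hs t ht hst).trans (le_abs_self _)
  · rw [dist_comm, Real.dist_eq, ← hF t ht s hs]
    exact (hle t ht s hs hts).trans (le_abs_self _)

/-- The derivatives of the distance functions to fixed points are bounded by any density
controlling the distance along the curve. -/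
theorem ae_abs_deriv_dist_le {Y : Type*} [PseudoMetricSpace Y] {I : Set ℝ}
    (hI : I.OrdConnected) {γ : ℝ → Y} {g : ℝ → ℝ} (hg0 : ∀ t, 0 ≤ g t) (hg : IntegrableOn g I)
    (hle : ∀ s ∈ I, ∀ t ∈ I, s ≤ t → dist (γ s) (γ t) ≤ ∫ r in s..t, g r) :
    ∀ᵐ t ∂(volume.restrict I), ∀ x : Y, |deriv (fun s => dist (γ s) x) t| ≤ g t := by
  obtain ⟨F, hF, -, hFd⟩ := exists_primitive_of_integrableOn hI hg
  filter_upwards [hFd, hI.ae_mem_nhds] with t ht htI x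
  refine (abs_deriv_le_of_eventually_dist_le ht ?_).trans_eq (abs_of_nonneg (hg0 t))
  filter_upwards [htI] with s hs
  exact (dist_dist_dist_le_left _ _ _).trans
    (dist_le_dist_primitive hF hle s hs t (mem_of_mem_nhds htI))

/-- The supremum of the absolute derivatives of the distance functions to the points `x n`. -/
noncomputable def supDerivDist {Y : Type*} [PseudoMetricSpace Y] (γ : ℝ → Y) (x : ℕ → Y)
    (t : ℝ) : ℝ :=
  ⨆ n, |deriv (fun s => dist (γ s) (x n)) t|

theorem supDerivDist_nonneg {Y : Type*} [PseudoMetricSpace Y] (γ : ℝ → Y) (x : ℕ → Y) (t : ℝ) :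
    0 ≤ supDerivDist γ x t :=
  Real.iSup_nonneg fun _ => abs_nonneg _

theorem measurable_supDerivDist {Y : Type*} [PseudoMetricSpace Y] (γ : ℝ → Y) (x : ℕ → Y) :
    Measurable (supDerivDist γ x) :=
  Measurable.iSup fun _ => (measurable_deriv _).abs

/-- The distance between two points whose first one lies in the closure of the range of `x` is
the supremum of the differences of the distances to the points `x n`. -/
theorem dist_le_of_forall_dist_dist_le {Y : Type*} [PseudoMetricSpace Y] {x : ℕ → Y} {p q : Y}
    {c : ℝ} (hp : p ∈ closure (range x)) (h : ∀ n, dist (dist p (x n)) (dist q (x n)) ≤ c) :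
    dist p q ≤ c := by
  have hclosed : IsClosed {z : Y | dist (dist p z) (dist q z) ≤ c} :=
    isClosed_le (by fun_prop) continuous_const
  have hmem : p ∈ {z : Y | dist (dist p z) (dist q z) ≤ c} :=
    closure_minimal (range_subset_iff.2 h) hclosed hp
  simpa [Real.dist_eq, dist_comm] using hmem

section MetricSpeed

variable {Y : Type*} [PseudoMetricSpace Y] {I : Set ℝ} {γ : ℝ → Y} {g : ℝ → ℝ}

theorem ae_supDerivDist_le (hI : I.OrdConnected) (hg0 : ∀ t, 0 ≤ g t) (hg : IntegrableOn g I)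
    (hle : ∀ s ∈ I, ∀ t ∈ I, s ≤ t → dist (γ s) (γ t) ≤ ∫ r in s..t, g r) (x : ℕ → Y) :
    ∀ᵐ t ∂(volume.restrict I), supDerivDist γ x t ≤ g t := by
  filter_upwards [ae_abs_deriv_dist_le hI hg0 hg hle] with t ht
  exact ciSup_le fun n => ht (x n)

theorem ae_abs_deriv_dist_le_supDerivDist (hI : I.OrdConnected) (hg0 : ∀ t, 0 ≤ g t)
    (hg : IntegrableOn g I)
    (hle : ∀ s ∈ I, ∀ t ∈ I, s ≤ t → dist (γ s) (γ t) ≤ ∫ r in s..t, g r) (x : ℕ → Y) :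
    ∀ᵐ t ∂(volume.restrict I), ∀ n,
      |deriv (fun s => dist (γ s) (x n)) t| ≤ supDerivDist γ x t := by
  filter_upwards [ae_abs_deriv_dist_le hI hg0 hg hle] with t ht n
  exact le_ciSup (f := fun n => |deriv (fun s => dist (γ s) (x n)) t|)
    ⟨g t, forall_mem_range.2 fun n => ht (x n)⟩ n

theorem integrableOn_supDerivDist (hI : I.OrdConnected) (hg0 : ∀ t, 0 ≤ g t)
    (hg : IntegrableOn g I)
    (hle : ∀ s ∈ I, ∀ t ∈ I, s ≤ t → dist (γ s) (γ t) ≤ ∫ r in s..t, g r) (x : ℕ → Y) :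
    IntegrableOn (supDerivDist γ x) I := by
  refine Integrable.mono' hg (measurable_supDerivDist γ x).aestronglyMeasurable ?_
  filter_upwards [ae_supDerivDist_le hI hg0 hg hle x] with t ht
  rwa [Real.norm_eq_abs, abs_of_nonneg (supDerivDist_nonneg γ x t)]

theorem absolutelyContinuousOnInterval_dist (hI : I.OrdConnected) (hg : IntegrableOn g I)
    (hle : ∀ s ∈ I, ∀ t ∈ I, s ≤ t → dist (γ s) (γ t) ≤ ∫ r in s..t, g r) (y : Y) {a b : ℝ}
    (ha : a ∈ I) (hb : b ∈ I) :
    AbsolutelyContinuousOnInterval (fun s => dist (γ s) y) a b := by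
  obtain ⟨F, hF, hFac, -⟩ := exists_primitive_of_integrableOn hI hg
  refine (hFac a b).of_dist_le_s18 fun s hs t ht => (dist_dist_dist_le_left _ _ _).trans ?_
  exact dist_le_dist_primitive hF hle s (hI.uIcc_subset ha hb hs) t (hI.uIcc_subset ha hb ht)

theorem ae_differentiableAt_dist (hI : I.OrdConnected) (hg : IntegrableOn g I)
    (hle : ∀ s ∈ I, ∀ t ∈ I, s ≤ t → dist (γ s) (γ t) ≤ ∫ r in s..t, g r) (y : Y) :
    ∀ᵐ t ∂(volume.restrict I), DifferentiableAt ℝ (fun s => dist (γ s) y) t := by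
  have hvar : LocallyBoundedVariationOn (fun s => dist (γ s) y) I := fun a b ha hb =>
    (absolutelyContinuousOnInterval_dist hI hg hle y ha hb).boundedVariationOn.mono
      (inter_subset_right.trans Icc_subset_uIcc)
  filter_upwards [hvar.ae_differentiableWithinAt hI.measurableSet, hI.ae_mem_nhds] with t ht htI
  exact ht.differentiableAt htI

/-- The supremum of the derivatives of the distance functions to a dense sequence of points
controls the distance along the curve. -/
theorem dist_le_integral_supDerivDist (hI : I.OrdConnected) (hg0 : ∀ t, 0 ≤ g t)
    (hg : IntegrableOn g I)
    (hle : ∀ s ∈ I, ∀ t ∈ I, s ≤ t → dist (γ s) (γ t) ≤ ∫ r in s..t, g r) {x : ℕ → Y}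
    (hx : γ '' I ⊆ closure (range x)) :
    ∀ s ∈ I, ∀ t ∈ I, s ≤ t → dist (γ s) (γ t) ≤ ∫ r in s..t, supDerivDist γ x r := by
  intro s hs t ht hst
  refine dist_le_of_forall_dist_dist_le (hx (mem_image_of_mem γ hs)) fun n => ?_
  have hac := absolutelyContinuousOnInterval_dist hI hg hle (x n) hs ht
  have hsub : Ioc s t ⊆ I := Ioc_subset_Icc_self.trans (hI.out hs ht)
  rw [dist_comm, Real.dist_eq, ← hac.integral_deriv_eq_sub, ← Real.norm_eq_abs]
  refine intervalIntegral.norm_integral_le_of_norm_le hst ?_ ?_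
  · rw [← ae_restrict_iff' measurableSet_Ioc]
    filter_upwards [ae_restrict_of_ae_restrict_of_subset hsub
      (ae_abs_deriv_dist_le_supDerivDist hI hg0 hg hle x)] with r hr using hr n
  · rw [intervalIntegrable_iff_integrableOn_Ioc_of_le hst]
    exact (integrableOn_supDerivDist hI hg0 hg hle x).mono_set hsub

/-- The metric difference quotients converge almost everywhere to the supremum of the derivatives
of the distance functions to a dense sequence of points. -/
theorem ae_tendsto_supDerivDist (hI : I.OrdConnected) (hg0 : ∀ t, 0 ≤ g t)
    (hg : IntegrableOn g I)
    (hle : ∀ s ∈ I, ∀ t ∈ I, s ≤ t → dist (γ s) (γ t) ≤ ∫ r in s..t, g r) {x : ℕ → Y}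
    (hx : γ '' I ⊆ closure (range x)) :
    ∀ᵐ t ∂(volume.restrict I),
      Tendsto (fun h => dist (γ (t + h)) (γ t) / |h|) (𝓝[≠] 0) (𝓝 (supDerivDist γ x t)) := by
  obtain ⟨F, hF, -, hFd⟩ :=
    exists_primitive_of_integrableOn hI (integrableOn_supDerivDist hI hg0 hg hle x)
  have hdist := dist_le_dist_primitive hF (dist_le_integral_supDerivDist hI hg0 hg hle hx)
  filter_upwards [hFd, hI.ae_mem_nhds,
    ae_all_iff.2 fun n => ae_differentiableAt_dist hI hg hle (x n)] with t ht htI hdiff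
  have hadd : Tendsto (fun h : ℝ => t + h) (𝓝[≠] 0) (𝓝 t) :=
    ((continuous_const_add t).tendsto' 0 t (add_zero t)).mono_left nhdsWithin_le_nhds
  rw [tendsto_order]
  constructor
  · intro c hc
    obtain ⟨n, hn⟩ := exists_lt_of_lt_ciSup hc
    filter_upwards [(hdiff n).hasDerivAt.tendsto_dist_div_abs.eventually (lt_mem_nhds hn)]
      with h hh
    refine hh.trans_le ?_
    gcongr
    exact dist_dist_dist_le_left _ _ _
  · intro c hc
    rw [← abs_of_nonneg (supDerivDist_nonneg γ x t)] at hc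
    filter_upwards [ht.tendsto_dist_div_abs.eventually (gt_mem_nhds hc), hadd htI] with h hh hhI
    refine lt_of_le_of_lt ?_ hh
    gcongr
    exact hdist _ hhI _ (mem_of_mem_nhds htI)

theorem continuousOn_of_dist_le_integral (hI : I.OrdConnected) (hg : IntegrableOn g I)
    (hle : ∀ s ∈ I, ∀ t ∈ I, s ≤ t → dist (γ s) (γ t) ≤ ∫ r in s..t, g r) :
    ContinuousOn γ I := by
  obtain ⟨F, hF, hFac, -⟩ := exists_primitive_of_integrableOn hI hg
  have hFc : Continuous F := continuous_iff_continuousAt.2 fun t =>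
    (hFac (t - 1) (t + 1)).continuousOn.continuousAt (by
      rw [uIcc_of_le (by linarith)]
      exact Icc_mem_nhds (by linarith) (by linarith))
  intro t ht
  rw [ContinuousWithinAt, tendsto_iff_dist_tendsto_zero]
  refine squeeze_zero' (Eventually.of_forall fun _ => dist_nonneg) ?_
    (tendsto_iff_dist_tendsto_zero.1 hFc.continuousWithinAt)
  filter_upwards [self_mem_nhdsWithin] with s hs
  exact dist_le_dist_primitive hF hle s hs t ht

end MetricSpeed

/-- **Existence and minimality of the metric speed** of an absolutely continuous curve on
an interval `I ⊆ ℝ`: for a.e. `t ∈ I` the limit `|γ̇_t| = lim_{h→0} d(γ_{t+h}, γ_t)/|h|`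
exists, is integrable on `I`, controls the distance, and is a.e. minimal among all
admissible integrable densities. -/
theorem metric_speed_exists {Y : Type*} [MetricSpace Y] (I : Set ℝ)
    (hI : I.OrdConnected) (γ : ℝ → Y) (hγ : AbsContOnSet γ I) :
    ∃ ms : ℝ → ℝ, (∀ t, 0 ≤ ms t) ∧
      (∀ᵐ t ∂(MeasureTheory.volume.restrict I),
        Filter.Tendsto (fun h => dist (γ (t + h)) (γ t) / |h|)
          (nhdsWithin 0 {h : ℝ | h ≠ 0 ∧ t + h ∈ I}) (nhds (ms t))) ∧
      MeasureTheory.IntegrableOn ms I ∧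
      (∀ s ∈ I, ∀ t ∈ I, s ≤ t → dist (γ s) (γ t) ≤ ∫ r in s..t, ms r) ∧
      (∀ g : ℝ → ℝ, (∀ t, 0 ≤ g t) → MeasureTheory.IntegrableOn g I →
        (∀ s ∈ I, ∀ t ∈ I, s ≤ t → dist (γ s) (γ t) ≤ ∫ r in s..t, g r) →
        ∀ᵐ t ∂(MeasureTheory.volume.restrict I), ms t ≤ g t) := by
  obtain ⟨g, hg0, hg, hle⟩ := hγ
  obtain rfl | hne := I.eq_empty_or_nonempty
  · exact ⟨0, by simp⟩
  have hsep : TopologicalSpace.IsSeparable (γ '' I) :=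
    (continuousOn_of_dist_le_integral hI hg hle).isSeparable_image (.of_separableSpace I)
  obtain ⟨C, hC, hCI⟩ := hsep
  have hCne : C.Nonempty := closure_nonempty_iff.1 ((hne.image γ).mono hCI)
  obtain ⟨x, rfl⟩ := hC.exists_eq_range hCne
  refine ⟨supDerivDist γ x, supDerivDist_nonneg γ x, ?_, integrableOn_supDerivDist hI hg0 hg hle x,
    dist_le_integral_supDerivDist hI hg0 hg hle hCI,
    fun _ hg0' hg' hle' => ae_supDerivDist_le hI hg0' hg' hle' x⟩
  filter_upwards [ae_tendsto_supDerivDist hI hg0 hg hle hCI] with t ht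
  exact ht.mono_left (nhdsWithin_mono 0 fun h hh => hh.1)
end
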